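/- For every \(\varepsilon>0\) there is a constant \(C_{\varepsilon}>0\) such that for all integers \(k\geq 2\), \(N\geq 1\), \(r\geq 1\) and all real \(t\) (write \(T=3+|t|\)), the absolutely convergent sum \(V_{N,3}(r)=(-1)^{k}\,r^{k-it}\sum_{n\geq 1}\frac{\tau_0(n)\,\tau_{it}(nN+r)}{(nN+r)^{k}}\,H_k\Bigl(\frac{r}{nN+r}\Bigr)\) satisfies: \(|V_{N,3}(r)|\leq C_{\varepsilon}\,(rT^2)^{\varepsilon}\,\frac{r}{N}\) if \(r\geq N/(1+T^2)\), and \(|V_{N,3}(r)|\leq C_{\varepsilon}\,\Bigl(\frac{r}{2(N+r)}\Bigr)^{k}N^{\varepsilon}\) if \(r< N/(1+T^2)\). -/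

import Mathlib

/-- `τ_s(n) = ∑_{n₁ n₂ = n} (n₁/n₂)^s = n^{-s} σ_{2s}(n)` for complex `s` and `n ≥ 1`. -/
noncomputable def tauC (s : ℂ) (n : ℕ) : ℂ :=
  ∑ d ∈ n.divisors, (((d : ℂ)) / ((n / d : ℕ) : ℂ)) ^ s

/-- The Gauss hypergeometric series
`₂F₁(a,b,c;z) = Γ(c)/(Γ(a)Γ(b)) ∑_{n≥0} Γ(a+n)Γ(b+n)/Γ(c+n) zⁿ/n!` (convergent for `|z| < 1`). -/
noncomputable def hyp2F1 (a b c z : ℂ) : ℂ :=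
  Complex.Gamma c / (Complex.Gamma a * Complex.Gamma b) *
    ∑' n : ℕ, Complex.Gamma (a + n) * Complex.Gamma (b + n) / Complex.Gamma (c + n) *
      z ^ n / (n.factorial : ℂ)

/-- `H_k(w) = Γ(k-it)Γ(k+it)/Γ(2k) · ₂F₁(k+it, k-it, 2k; w)` for `0 < w < 1`. -/
noncomputable def Hfun (k : ℕ) (t : ℝ) (w : ℝ) : ℂ :=
  Complex.Gamma ((k : ℂ) - t * Complex.I) * Complex.Gamma ((k : ℂ) + t * Complex.I) /
      Complex.Gamma (2 * (k : ℂ)) *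
    hyp2F1 ((k : ℂ) + t * Complex.I) ((k : ℂ) - t * Complex.I) (2 * (k : ℂ)) (w : ℂ)

/-- The summand of `V_{N,3}(r)`, indexed over `n ≥ 1` (here `n` runs over `ℕ` via `n+1`):
`τ₀(n) τ_{it}(nN+r)/(nN+r)^k · H_k(r/(nN+r))`. -/
noncomputable def V3term (k N r : ℕ) (t : ℝ) (n : ℕ) : ℂ :=
  (((n + 1).divisors.card : ℂ)) * tauC (t * Complex.I) ((n + 1) * N + r) /
      ((((n + 1) * N + r : ℕ) : ℂ)) ^ (k : ℂ) *
    Hfun k t ((r : ℝ) / (((n + 1) * N + r : ℕ) : ℝ))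

/-- `V_{N,3}(r) = (-1)^k r^{k-it} ∑_{n≥1} τ₀(n) τ_{it}(nN+r)/(nN+r)^k H_k(r/(nN+r))`. -/
noncomputable def V3 (k N r : ℕ) (t : ℝ) : ℂ :=
  (-1 : ℂ) ^ k * ((r : ℂ)) ^ ((k : ℂ) - t * Complex.I) * ∑' n : ℕ, V3term k N r t n

lemma divisor_bound (η : ℝ) (hη : 0 < η) :
    ∃ D : ℝ, 0 < D ∧ ∀ n : ℕ, n ≠ 0 → (n.divisors.card : ℝ) ≤ D * (n : ℝ) ^ η := by
  set B : ℝ := max 1 (1 / (η * Real.log 2)) with hB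
  have hl : 0 < η * Real.log 2 := mul_pos hη (Real.log_pos (by norm_num))
  have hB1 : 1 ≤ B := le_max_left _ _
  have hB2 : 1 ≤ B * (η * Real.log 2) := by
    have : 1 / (η * Real.log 2) ≤ B := le_max_right _ _
    rwa [div_le_iff₀ hl] at this
  obtain ⟨P, hP⟩ := exists_nat_ge ((2 : ℝ) ^ (1 / η))
  refine ⟨B ^ P, by positivity, fun n hn => ?_⟩
  rw [Nat.card_divisors hn]
  have key : ∀ p ∈ n.primeFactors, ((n.factorization p + 1 : ℕ) : ℝ) ≤
      (if p < P then B else 1) * (((p : ℝ) ^ (n.factorization p)) ^ η) := by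
    intro p hp
    have hp2 : 2 ≤ p := (Nat.prime_of_mem_primeFactors hp).two_le
    have hp2' : (2 : ℝ) ≤ p := by exact_mod_cast hp2
    set a := n.factorization p
    have hcomm : ((p : ℝ) ^ a) ^ η = ((p : ℝ) ^ η) ^ a := by
      rw [← Real.rpow_natCast, ← Real.rpow_natCast, ← Real.rpow_mul (by positivity),
        ← Real.rpow_mul (by positivity), mul_comm]
    rw [hcomm]
    split_ifs with h
    · have h1 : 1 + η * Real.log 2 ≤ (p : ℝ) ^ η := by
        calc 1 + η * Real.log 2 ≤ Real.exp (η * Real.log 2) := by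
              linarith [Real.add_one_le_exp (η * Real.log 2)]
          _ = (2 : ℝ) ^ η := by rw [Real.rpow_def_of_pos (by norm_num), mul_comm]
          _ ≤ _ := Real.rpow_le_rpow (by norm_num) hp2' hη.le
      have h2 : 1 + (a : ℝ) * (η * Real.log 2) ≤ ((p : ℝ) ^ η) ^ a := by
        calc _ ≤ (1 + η * Real.log 2) ^ a := one_add_mul_le_pow (by linarith) a
          _ ≤ _ := pow_le_pow_left₀ (by linarith) h1 a
      push_cast
      have ha : (0 : ℝ) ≤ a := by positivity
      calc (a : ℝ) + 1 ≤ B * (1 + (a : ℝ) * (η * Real.log 2)) := by nlinarith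
        _ ≤ _ := by gcongr
    · rw [one_mul]
      have h1 : (2 : ℝ) ≤ (p : ℝ) ^ η := by
        have : (2 : ℝ) ^ (1 / η) ≤ p := hP.trans (by exact_mod_cast not_lt.mp h)
        calc (2 : ℝ) = ((2 : ℝ) ^ (1 / η)) ^ η := by
              rw [← Real.rpow_mul (by norm_num), one_div_mul_cancel hη.ne', Real.rpow_one]
          _ ≤ _ := Real.rpow_le_rpow (by positivity) this hη.le
      calc ((a + 1 : ℕ) : ℝ) ≤ (2 : ℝ) ^ a := by exact_mod_cast Nat.lt_two_pow_self
        _ ≤ _ := pow_le_pow_left₀ (by norm_num) h1 a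
  have hn' : (n : ℝ) ^ η = ∏ p ∈ n.primeFactors, ((p : ℝ) ^ (n.factorization p)) ^ η := by
    rw [Real.finsetProd_rpow _ _ (fun i _ => by positivity)]
    congr 1
    conv_lhs => rw [← Nat.prod_factorization_pow_eq_self hn]
    rw [Finsupp.prod]
    push_cast
    rfl
  push_cast
  calc _ ≤ ∏ p ∈ n.primeFactors,
        (if p < P then B else 1) * (((p : ℝ) ^ (n.factorization p)) ^ η) := by
        apply Finset.prod_le_prod
        · intro i _; positivity
        · intro i hi; simpa using key i hi
    _ = (∏ p ∈ n.primeFactors, (if p < P then B else 1)) * (n : ℝ) ^ η := by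
        rw [Finset.prod_mul_distrib, hn']
    _ ≤ _ := by
        gcongr
        rw [Finset.prod_ite, Finset.prod_const, Finset.prod_const_one, mul_one]
        apply pow_le_pow_right₀ hB1
        calc _ ≤ (Finset.range P).card := by
              apply Finset.card_le_card
              intro p hp
              simp at hp ⊢
              exact hp.2
          _ = P := Finset.card_range P

lemma norm_Gamma_le {s : ℂ} (hs : 0 < s.re) : ‖Complex.Gamma s‖ ≤ Real.Gamma s.re := by
  rw [Complex.Gamma_eq_integral hs, Real.Gamma_eq_integral hs, Complex.GammaIntegral]
  refine (MeasureTheory.norm_integral_le_integral_norm _).trans (le_of_eq ?_)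
  refine MeasureTheory.setIntegral_congr_fun measurableSet_Ioi fun x hx => ?_
  rw [norm_mul, Complex.norm_of_nonneg (Real.exp_pos _).le,
    Complex.norm_cpow_eq_rpow_re_of_pos hx]
  simp

lemma fact_A (j m : ℕ) : (j + m).factorial ^ 2 * (m + 1) ≤ (2 * j + 1 + m).factorial * m.factorial := by
  induction j with
  | zero =>
    simp only [Nat.zero_add, Nat.mul_zero]
    rw [Nat.add_comm 1 m, Nat.factorial_succ]
    apply le_of_eq; ring
  | succ j ih =>
    have e1 : (j + 1 + m).factorial = (j + m + 1) * (j + m).factorial := by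
      rw [← Nat.factorial_succ]; congr 1; ring
    have e2 : (2 * (j + 1) + 1 + m).factorial =
        (2 * j + 3 + m) * ((2 * j + 2 + m) * (2 * j + 1 + m).factorial) := by
      rw [show 2 * (j + 1) + 1 + m = (2 * j + 1 + m + 1) + 1 by ring, Nat.factorial_succ,
        Nat.factorial_succ]
      ring
    rw [e1, e2]
    have h : (j + m + 1) ^ 2 ≤ (2 * j + 3 + m) * (2 * j + 2 + m) := by nlinarith
    calc _ = (j + m + 1) ^ 2 * ((j + m).factorial ^ 2 * (m + 1)) := by ring
      _ ≤ _ := Nat.mul_le_mul h ih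
      _ = _ := by ring

lemma fact_B0 (j m : ℕ) : j.factorial * (j + m).factorial * 4 ^ j ≤ (2 * j + 1 + m).factorial := by
  induction j with
  | zero =>
    simp only [Nat.zero_add, Nat.mul_zero, Nat.factorial_zero, pow_zero, one_mul, mul_one]
    exact Nat.factorial_le (by omega)
  | succ j ih =>
    have e1 : (j + 1 + m).factorial = (j + m + 1) * (j + m).factorial := by
      rw [← Nat.factorial_succ]; congr 1; ring
    have e2 : (2 * (j + 1) + 1 + m).factorial =
        (2 * j + 3 + m) * ((2 * j + 2 + m) * (2 * j + 1 + m).factorial) := by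
      rw [show 2 * (j + 1) + 1 + m = (2 * j + 1 + m + 1) + 1 by ring, Nat.factorial_succ,
        Nat.factorial_succ]
      ring
    rw [e1, e2, Nat.factorial_succ]
    have h : 4 * (j + 1) * (j + m + 1) ≤ (2 * j + 3 + m) * (2 * j + 2 + m) := by nlinarith
    calc _ = (4 * (j + 1) * (j + m + 1)) * (j.factorial * (j + m).factorial * 4 ^ j) := by ring
      _ ≤ _ := Nat.mul_le_mul h ih
      _ = _ := by ring

lemma fact_B (j m : ℕ) :
    (j + m).factorial ^ 2 * 2 ^ j ≤ 2 ^ m * ((2 * j + 1 + m).factorial * m.factorial) := by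
  have h1 : (j + m).factorial ≤ 2 ^ (j + m) * (j.factorial * m.factorial) := by
    rw [← Nat.add_choose_mul_factorial_mul_factorial, mul_assoc]
    exact Nat.mul_le_mul_right _ (Nat.choose_le_two_pow _ _)
  have h2 := fact_B0 j m
  have h4 : (4 : ℕ) ^ j = 2 ^ j * 2 ^ j := by rw [← mul_pow]; norm_num
  have : 2 ^ j * ((j + m).factorial ^ 2 * 2 ^ j) ≤
      2 ^ j * (2 ^ m * ((2 * j + 1 + m).factorial * m.factorial)) := by
    calc _ = (j + m).factorial * ((j + m).factorial * 4 ^ j) := by rw [h4]; ring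
      _ ≤ (2 ^ (j + m) * (j.factorial * m.factorial)) * ((j + m).factorial * 4 ^ j) :=
        Nat.mul_le_mul_right _ h1
      _ = 2 ^ (j + m) * m.factorial * (j.factorial * (j + m).factorial * 4 ^ j) := by ring
      _ ≤ 2 ^ (j + m) * m.factorial * (2 * j + 1 + m).factorial := Nat.mul_le_mul_left _ h2
      _ = _ := by rw [pow_add]; ring
  exact Nat.le_of_mul_le_mul_left this (by positivity)

noncomputable def cc (j m : ℕ) : ℝ :=
  ((j + m).factorial : ℝ) ^ 2 / (((2 * j + 1 + m).factorial : ℝ) * (m.factorial : ℝ))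

lemma cc_A (j m : ℕ) : cc j m ≤ 1 / ((m : ℝ) + 1) := by
  unfold cc
  rw [div_le_div_iff₀ (by positivity) (by positivity), one_mul]
  exact_mod_cast fact_A j m

lemma cc_B (j m : ℕ) : cc j m ≤ 2 ^ m / 2 ^ j := by
  unfold cc
  rw [div_le_div_iff₀ (by positivity) (by positivity)]
  exact_mod_cast fact_B j m

lemma Hfun_bound (j : ℕ) (t w : ℝ) (hw : 0 < w) (b : ℕ → ℝ) (s : ℝ) (hb : HasSum b s)
    (h : ∀ m, cc j m * w ^ m ≤ b m) : ‖Hfun (j + 1) t w‖ ≤ s := by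
  have g1 : Complex.Gamma (((j + 1 : ℕ) : ℂ) - t * Complex.I) ≠ 0 := by
    apply Complex.Gamma_ne_zero_of_re_pos
    simp; positivity
  have g2 : Complex.Gamma (((j + 1 : ℕ) : ℂ) + t * Complex.I) ≠ 0 := by
    apply Complex.Gamma_ne_zero_of_re_pos
    simp; positivity
  have g3 : Complex.Gamma (2 * ((j + 1 : ℕ) : ℂ)) ≠ 0 := by
    apply Complex.Gamma_ne_zero_of_re_pos
    simp; positivity
  unfold Hfun hyp2F1
  rw [← mul_assoc, show ∀ a b c : ℂ, a ≠ 0 → b ≠ 0 → c ≠ 0 → a * b / c * (c / (b * a)) = 1 from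
    fun a b c ha hb hc => by field_simp, one_mul]
  rotate_left
  · exact g1
  · exact g2
  · exact g3
  refine tsum_of_norm_bounded hb fun m => le_trans ?_ (h m)
  have b1 : ‖Complex.Gamma (((j + 1 : ℕ) : ℂ) + t * Complex.I + m)‖ ≤ (j + m).factorial := by
    refine (norm_Gamma_le (by simp; positivity)).trans (le_of_eq ?_)
    rw [← Real.Gamma_nat_eq_factorial]
    congr 1; simp; ring
  have b2 : ‖Complex.Gamma (((j + 1 : ℕ) : ℂ) - t * Complex.I + m)‖ ≤ (j + m).factorial := by
    refine (norm_Gamma_le (by simp; positivity)).trans (le_of_eq ?_)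
    rw [← Real.Gamma_nat_eq_factorial]
    congr 1; simp; ring
  have b3 : Complex.Gamma (2 * ((j + 1 : ℕ) : ℂ) + m) = ((2 * j + 1 + m).factorial : ℂ) := by
    rw [← Complex.Gamma_nat_eq_factorial]
    congr 1; push_cast; ring
  rw [b3]
  simp only [norm_mul, norm_div, norm_pow, Complex.norm_natCast, Complex.norm_real,
    Real.norm_of_nonneg hw.le]
  unfold cc
  calc _ ≤ ((j + m).factorial : ℝ) * (j + m).factorial / (2 * j + 1 + m).factorial * w ^ m
        / m.factorial := by gcongr
    _ = _ := by field_simp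

lemma H_log (j : ℕ) (t w : ℝ) (hw : 0 < w) (hw1 : w < 1) :
    w * ‖Hfun (j + 1) t w‖ ≤ -Real.log (1 - w) := by
  have h := Real.hasSum_pow_div_log_of_abs_lt_one (x := w) (by rw [abs_of_pos hw]; exact hw1)
  have h2 := h.mul_left w⁻¹
  have := Hfun_bound j t w hw _ _ h2 (fun m => by
    calc cc j m * w ^ m ≤ 1 / ((m : ℝ) + 1) * w ^ m := by gcongr; exact cc_A j m
      _ = _ := by rw [pow_succ]; field_simp)
  calc _ ≤ w * (w⁻¹ * -Real.log (1 - w)) := by gcongr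
    _ = _ := by field_simp

lemma H_small (j : ℕ) (t w : ℝ) (hw : 0 < w) (hw1 : w ≤ 1 / 4) :
    ‖Hfun (j + 1) t w‖ ≤ 4 * (1 / 2) ^ (j + 1) := by
  have h2 := (hasSum_geometric_of_lt_one (r := 2 * w) (by positivity) (by linarith)).mul_left
    ((1 / 2 : ℝ) ^ j)
  have := Hfun_bound j t w hw _ _ h2 (fun m => by
    calc cc j m * w ^ m ≤ 2 ^ m / 2 ^ j * w ^ m := by gcongr; exact cc_B j m
      _ = _ := by rw [mul_pow, one_div, inv_pow]; ring)
  refine this.trans ?_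
  have : (1 - 2 * w)⁻¹ ≤ 2 := by
    rw [inv_le_comm₀ (by linarith) (by norm_num)]; linarith
  calc _ ≤ (1 / 2 : ℝ) ^ j * 2 := by gcongr
    _ = _ := by rw [pow_succ]; ring

lemma log_add_le (x δ : ℝ) (hx : 0 < x) (hδ : 0 < δ) (hδ1 : δ ≤ 1) :
    Real.log (1 + x) ≤ x ^ δ / δ := by
  have h1 : (1 + x) ^ δ ≤ 1 + x ^ δ := by
    have := NNReal.rpow_add_le_add_rpow 1 ⟨x, hx.le⟩ hδ.le hδ1
    have h := NNReal.coe_le_coe.mpr this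
    rw [NNReal.one_rpow] at h
    exact h
  rw [le_div_iff₀ hδ, mul_comm, ← Real.log_rpow (by positivity)]
  have := Real.log_le_sub_one_of_pos (show 0 < (1 + x) ^ δ by positivity)
  linarith

lemma wkH (k : ℕ) (hk : 2 ≤ k) (t y r δ : ℝ) (hy : 0 < y) (hr : 0 < r) (hδ : 0 < δ) (hδ1 : δ ≤ 1) :
    (r / (y + r)) ^ k * ‖Hfun k t (r / (y + r))‖ ≤ (r / y) ^ (1 + δ) / δ := by
  obtain ⟨j, rfl⟩ : ∃ j, k = j + 1 := ⟨k - 1, by omega⟩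
  have hw : 0 < r / (y + r) := by positivity
  have hw1 : r / (y + r) < 1 := by rw [div_lt_one (by positivity)]; linarith
  have hwx : r / (y + r) ≤ r / y := by gcongr; linarith
  have h1 := H_log j t _ hw hw1
  have e : -Real.log (1 - r / (y + r)) = Real.log (1 + r / y) := by
    rw [← Real.log_inv]
    congr 1
    have : 1 - r / (y + r) = y / (y + r) := by field_simp; ring
    rw [this, inv_div, add_div, div_self hy.ne']
  rw [e] at h1
  have h2 := log_add_le (r / y) δ (by positivity) hδ hδ1
  have h3 : (r / (y + r)) ^ (j + 1) ≤ (r / (y + r)) ^ 2 :=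
    pow_le_pow_of_le_one hw.le hw1.le hk
  calc _ ≤ (r / (y + r)) ^ 2 * ‖Hfun (j + 1) t (r / (y + r))‖ := by gcongr
    _ = (r / (y + r)) * ((r / (y + r)) * ‖Hfun (j + 1) t (r / (y + r))‖) := by ring
    _ ≤ (r / y) * ((r / y) ^ δ / δ) := by
        gcongr
        exact h1.trans h2
    _ = _ := by rw [Real.rpow_add (by positivity), Real.rpow_one]; ring

lemma tauC_bound (t : ℝ) (n : ℕ) : ‖tauC (t * Complex.I) n‖ ≤ n.divisors.card := by
  unfold tauC
  refine (norm_sum_le _ _).trans ?_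
  rw [Finset.card_eq_sum_ones]
  push_cast
  refine Finset.sum_le_sum fun d hd => ?_
  have hd1 : 0 < d := Nat.pos_of_mem_divisors hd
  have hd2 : 0 < n / d := Nat.div_pos (Nat.divisor_le hd) hd1
  have : ((d : ℂ) / ((n / d : ℕ) : ℂ)) = (((d : ℝ) / ((n / d : ℕ) : ℝ) : ℝ) : ℂ) := by
    push_cast; rfl
  rw [this, Complex.norm_cpow_eq_rpow_re_of_pos (by positivity)]
  simp

lemma term_bound (k N r : ℕ) (t : ℝ) (hN : 1 ≤ N) (hr : 1 ≤ r) (D η : ℝ) (hD0 : 0 < D)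
    (hD : ∀ n : ℕ, n ≠ 0 → (n.divisors.card : ℝ) ≤ D * (n : ℝ) ^ η) (n : ℕ) :
    (r : ℝ) ^ k * ‖V3term k N r t n‖ ≤
      (D * ((n : ℝ) + 1) ^ η) * (D * (((n : ℝ) + 1) * N + r) ^ η) *
      (((r : ℝ) / (((n : ℝ) + 1) * N + r)) ^ k *
        ‖Hfun k t ((r : ℝ) / (((n : ℝ) + 1) * N + r))‖) := by
  unfold V3term
  have h1 := hD (n + 1) (by omega)
  have h2 := (tauC_bound t ((n + 1) * N + r)).trans (hD ((n + 1) * N + r) (by omega))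
  push_cast at h1 h2
  rw [Complex.cpow_natCast]
  simp only [norm_mul, norm_div, norm_pow, Complex.norm_natCast]
  push_cast
  rw [div_pow]
  have hX : (0 : ℝ) < ((n : ℝ) + 1) * N + r := by positivity
  have hh := norm_nonneg (Hfun k t ((r : ℝ) / (((n : ℝ) + 1) * N + r)))
  generalize ‖Hfun k t ((r : ℝ) / (((n : ℝ) + 1) * N + r))‖ = h at *
  calc _ = ((n + 1).divisors.card : ℝ) * ‖tauC (t * Complex.I) ((n + 1) * N + r)‖ *
        ((r : ℝ) ^ k / (((n : ℝ) + 1) * N + r) ^ k * h) := by ring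
    _ ≤ _ := by gcongr

/-- For every `ε > 0` there is `C_ε > 0` such that for all integers `k ≥ 2`, `N ≥ 1`, `r ≥ 1`
and all real `t` (with `T = 3 + |t|`), the sum defining `V_{N,3}(r)` converges absolutely and:
`|V_{N,3}(r)| ≤ C_ε (rT²)^ε r/N` if `r ≥ N/(1+T²)`, while
`|V_{N,3}(r)| ≤ C_ε (r/(2(N+r)))^k N^ε` if `r < N/(1+T²)`. -/
theorem V3_bound (ε : ℝ) (hε : 0 < ε) :
    ∃ C : ℝ, 0 < C ∧ ∀ (k N r : ℕ) (t : ℝ), 2 ≤ k → 1 ≤ N → 1 ≤ r →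
      Summable (V3term k N r t) ∧
      ((N : ℝ) / (1 + (3 + |t|) ^ 2) ≤ (r : ℝ) →
        ‖V3 k N r t‖ ≤ C * ((r : ℝ) * (3 + |t|) ^ 2) ^ ε * ((r : ℝ) / N)) ∧
      ((r : ℝ) < (N : ℝ) / (1 + (3 + |t|) ^ 2) →
        ‖V3 k N r t‖ ≤ C * ((r : ℝ) / (2 * ((N : ℝ) + r))) ^ k * (N : ℝ) ^ ε) := by
  obtain ⟨η, hη, hη1, hηε⟩ : ∃ η : ℝ, 0 < η ∧ η ≤ 1 / 5 ∧ 5 * η ≤ ε :=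
    ⟨min ε 1 / 5, by positivity, by linarith [min_le_right ε 1], by linarith [min_le_left ε 1]⟩
  obtain ⟨D, hD0, hD⟩ := divisor_bound η hη
  have hS : Summable (fun n : ℕ => ((n : ℝ) + 1) ^ (-1 - η)) := by
    have := (summable_nat_add_iff 1).mpr (Real.summable_nat_rpow (p := -1 - η) |>.mpr (by linarith))
    simpa using this
  set S := ∑' n : ℕ, ((n : ℝ) + 1) ^ (-1 - η) with hSdef
  have hS0 : 0 ≤ S := tsum_nonneg fun n => by positivity
  refine ⟨D ^ 2 * (S + 1) * (2 / (3 * η) + 32), by positivity, ?_⟩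
  intro k N r t hk hN hr
  have hN' : (1 : ℝ) ≤ N := by exact_mod_cast hN
  have hr' : (1 : ℝ) ≤ r := by exact_mod_cast hr
  have hr0 : (0 : ℝ) < r := by linarith
  have hN0 : (0 : ℝ) < N := by linarith
  -- bounded sums give bounds for V3
  have hV : ∀ A : ℝ, (∀ n : ℕ, (r : ℝ) ^ k * ‖V3term k N r t n‖ ≤ A * ((n : ℝ) + 1) ^ (-1 - η)) →
      Summable (V3term k N r t) ∧ ‖V3 k N r t‖ ≤ A * S := by
    intro A hA
    have hb : ∀ n : ℕ, ‖V3term k N r t n‖ ≤ ((r : ℝ) ^ k)⁻¹ * A * ((n : ℝ) + 1) ^ (-1 - η) := by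
      intro n
      have := hA n
      rw [mul_comm, ← le_div_iff₀ (by positivity)] at this
      refine this.trans (le_of_eq ?_)
      field_simp
    refine ⟨Summable.of_norm_bounded (hS.mul_left _) hb, ?_⟩
    have h1 := tsum_of_norm_bounded (hS.mul_left _).hasSum hb
    rw [tsum_mul_left] at h1
    unfold V3
    rw [norm_mul, norm_mul, norm_pow, norm_neg, norm_one, one_pow, one_mul]
    have : ‖(r : ℂ) ^ ((k : ℂ) - t * Complex.I)‖ = (r : ℝ) ^ k := by
      rw [← Complex.ofReal_natCast r, Complex.norm_cpow_eq_rpow_re_of_pos hr0]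
      simp
    rw [this]
    calc _ ≤ (r : ℝ) ^ k * (((r : ℝ) ^ k)⁻¹ * A * S) := by gcongr
      _ = _ := by field_simp
  have hgen : ∀ n : ℕ, (r : ℝ) ^ k * ‖V3term k N r t n‖ ≤
      (D ^ 2 * ((N : ℝ) + r) ^ η * ((r : ℝ) / N) ^ (1 + 3 * η) / (3 * η)) *
        ((n : ℝ) + 1) ^ (-1 - η) := by
    intro n
    have hm : (0 : ℝ) < (n : ℝ) + 1 := by positivity
    have hm1 : (1 : ℝ) ≤ (n : ℝ) + 1 := by linarith [(Nat.cast_nonneg n : (0 : ℝ) ≤ n)]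
    refine (term_bound k N r t hN hr D η hD0 hD n).trans ?_
    have h1 := wkH k hk t (((n : ℝ) + 1) * N) r (3 * η) (by positivity) hr0 (by positivity)
      (by linarith)
    have h2 : (((n : ℝ) + 1) * N + r) ^ η ≤ ((n : ℝ) + 1) ^ η * ((N : ℝ) + r) ^ η := by
      rw [← Real.mul_rpow (by positivity) (by positivity)]
      apply Real.rpow_le_rpow (by positivity) _ hη.le
      nlinarith
    have e : ((r : ℝ) / (((n : ℝ) + 1) * N)) ^ (1 + 3 * η) =
        ((r : ℝ) / N) ^ (1 + 3 * η) * ((n : ℝ) + 1) ^ (-(1 + 3 * η)) := by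
      rw [Real.rpow_neg (by positivity), ← div_eq_mul_inv,
        ← Real.div_rpow (by positivity) (by positivity)]
      congr 1; field_simp
    rw [e] at h1
    have e2 : ((n : ℝ) + 1) ^ (-1 - η) = ((n : ℝ) + 1) ^ η * ((n : ℝ) + 1) ^ η *
        ((n : ℝ) + 1) ^ (-(1 + 3 * η)) := by
      rw [← Real.rpow_add hm, ← Real.rpow_add hm]; congr 1; ring
    rw [e2]
    calc _ ≤ (D * ((n : ℝ) + 1) ^ η) * (D * (((n : ℝ) + 1) ^ η * ((N : ℝ) + r) ^ η)) *
          (((r : ℝ) / N) ^ (1 + 3 * η) * ((n : ℝ) + 1) ^ (-(1 + 3 * η)) / (3 * η)) := by gcongr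
      _ = _ := by ring
  obtain ⟨hsum, hbd⟩ := hV _ hgen
  have hT0 : 0 ≤ |t| := abs_nonneg t
  refine ⟨hsum, fun hcase => ?_, fun hcase => ?_⟩
  · refine hbd.trans ?_
    set Y : ℝ := (3 + |t|) ^ 2 with hY
    have hY9 : 9 ≤ Y := by nlinarith
    rw [div_le_iff₀ (by positivity)] at hcase
    have hrY : 1 ≤ (r : ℝ) * Y := by nlinarith
    have i1 : ((N : ℝ) + r) ^ η ≤ 2 * ((r : ℝ) * Y) ^ η := by
      calc ((N : ℝ) + r) ^ η ≤ (2 * ((r : ℝ) * Y)) ^ η := by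
            apply Real.rpow_le_rpow (by positivity) _ hη.le
            nlinarith
        _ = 2 ^ η * ((r : ℝ) * Y) ^ η := Real.mul_rpow (by norm_num) (by positivity)
        _ ≤ _ := by
            gcongr
            calc (2 : ℝ) ^ η ≤ 2 ^ (1 : ℝ) :=
                  Real.rpow_le_rpow_of_exponent_le (by norm_num) (by linarith)
              _ = 2 := Real.rpow_one 2
    have i2 : ((r : ℝ) / N) ^ (1 + 3 * η) ≤ ((r : ℝ) / N) * ((r : ℝ) * Y) ^ (3 * η) := by
      rw [Real.rpow_add (by positivity), Real.rpow_one]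
      gcongr
      calc (r : ℝ) / N ≤ r := div_le_self hr0.le hN'
        _ ≤ _ := by nlinarith
    have i3 : ((r : ℝ) * Y) ^ η * ((r : ℝ) * Y) ^ (3 * η) ≤ ((r : ℝ) * Y) ^ ε := by
      rw [← Real.rpow_add (by linarith)]
      exact Real.rpow_le_rpow_of_exponent_le hrY (by linarith)
    calc _ ≤ (D ^ 2 * (2 * ((r : ℝ) * Y) ^ η) * (((r : ℝ) / N) * ((r : ℝ) * Y) ^ (3 * η))
            / (3 * η)) * S := by gcongr
      _ = D ^ 2 * S * (2 / (3 * η)) * (((r : ℝ) * Y) ^ η * ((r : ℝ) * Y) ^ (3 * η))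
            * ((r : ℝ) / N) := by ring
      _ ≤ D ^ 2 * (S + 1) * (2 / (3 * η) + 32) * ((r : ℝ) * Y) ^ ε * ((r : ℝ) / N) := by
          gcongr <;> linarith
  · have hY9 : 9 ≤ (3 + |t|) ^ 2 := by nlinarith
    have hrN : 10 * (r : ℝ) ≤ N := by
      rw [lt_div_iff₀ (by positivity)] at hcase
      nlinarith
    have hsm : ∀ n : ℕ, (r : ℝ) ^ k * ‖V3term k N r t n‖ ≤
        (D ^ 2 * 32 * ((r : ℝ) / (2 * ((N : ℝ) + r))) ^ k * (N : ℝ) ^ η) *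
          ((n : ℝ) + 1) ^ (-1 - η) := by
      intro n
      have hm : (0 : ℝ) < (n : ℝ) + 1 := by positivity
      have hm1 : (1 : ℝ) ≤ (n : ℝ) + 1 := by linarith [(Nat.cast_nonneg n : (0 : ℝ) ≤ n)]
      refine (term_bound k N r t hN hr D η hD0 hD n).trans ?_
      generalize (n : ℝ) + 1 = m at *
      have hX : (0 : ℝ) < m * N + r := by positivity
      have h1 : ‖Hfun k t ((r : ℝ) / (m * N + r))‖ ≤ 4 * (1 / 2) ^ k := by
        obtain ⟨j, rfl⟩ : ∃ j, k = j + 1 := ⟨k - 1, by omega⟩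
        apply H_small j t _ (by positivity)
        rw [div_le_div_iff₀ hX (by norm_num)]
        nlinarith
      have h2 : (m * N + r) ^ η ≤ 2 * (m ^ η * (N : ℝ) ^ η) := by
        calc (m * N + r) ^ η ≤ (2 * (m * N)) ^ η := by
              apply Real.rpow_le_rpow (by positivity) _ hη.le
              nlinarith
          _ = 2 ^ η * (m ^ η * (N : ℝ) ^ η) := by
              rw [Real.mul_rpow (by norm_num) (by positivity),
                Real.mul_rpow (by positivity) (by positivity)]
          _ ≤ _ := by
              gcongr
              calc (2 : ℝ) ^ η ≤ 2 ^ (1 : ℝ) :=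
                    Real.rpow_le_rpow_of_exponent_le (by norm_num) (by linarith)
                _ = 2 := Real.rpow_one 2
      have h3 : ((r : ℝ) / (m * N + r)) ^ k ≤ ((r : ℝ) / (N + r)) ^ k * (4 * m ^ (-2 : ℝ)) := by
        have e : (r : ℝ) / (m * N + r) = (r : ℝ) / (N + r) * ((N + r) / (m * N + r)) := by
          field_simp
        rw [e, mul_pow]
        gcongr
        have q1 : ((N : ℝ) + r) / (m * N + r) ≤ 1 := by
          rw [div_le_one hX]; nlinarith
        have q2 : ((N : ℝ) + r) / (m * N + r) ≤ 2 / m := by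
          rw [div_le_div_iff₀ hX hm]; nlinarith
        calc _ ≤ (((N : ℝ) + r) / (m * N + r)) ^ 2 :=
              pow_le_pow_of_le_one (by positivity) q1 hk
          _ ≤ (2 / m) ^ 2 := by gcongr
          _ = _ := by
              rw [Real.rpow_neg hm.le, Real.rpow_two]; field_simp; norm_num
      have e2 : m ^ η * m ^ η * m ^ (-2 : ℝ) ≤ m ^ (-1 - η) := by
        rw [← Real.rpow_add hm, ← Real.rpow_add hm]
        exact Real.rpow_le_rpow_of_exponent_le hm1 (by linarith)
      have e3 : ((r : ℝ) / (2 * ((N : ℝ) + r))) ^ k = ((r : ℝ) / (N + r)) ^ k * (1 / 2) ^ k := by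
        rw [← mul_pow]; congr 1; field_simp
      rw [e3]
      calc _ ≤ (D * m ^ η) * (D * (2 * (m ^ η * (N : ℝ) ^ η))) *
            ((((r : ℝ) / (N + r)) ^ k * (4 * m ^ (-2 : ℝ))) * (4 * (1 / 2) ^ k)) := by gcongr
        _ = (D ^ 2 * 32 * (((r : ℝ) / (N + r)) ^ k * (1 / 2) ^ k) * (N : ℝ) ^ η) *
            (m ^ η * m ^ η * m ^ (-2 : ℝ)) := by ring
        _ ≤ _ := by gcongr
    refine (hV _ hsm).2.trans ?_
    have i1 : (N : ℝ) ^ η ≤ (N : ℝ) ^ ε := Real.rpow_le_rpow_of_exponent_le hN' (by linarith)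
    have i2 : (0 : ℝ) ≤ 2 / (3 * η) := by positivity
    calc _ = D ^ 2 * S * 32 * ((r : ℝ) / (2 * ((N : ℝ) + r))) ^ k * (N : ℝ) ^ η := by ring
      _ ≤ _ := by gcongr <;> linarith
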